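/- Let d be a positive integer, let m_1,…,m_d be non-negative integers and u_1,…,u_d be non-negative integers with u_d ≥ 1, and set s := ⊔_{i=1}^{d}(m_i+2, {1}_{u_i}), a tuple of length ‖s‖ with weight |s|. Let a, p ∈ ℝ with p ≠ 1 and |a| ≤ min(1, 2/p − 1). Then Li*_s({1}_{‖s‖−1}, a) = Li*_{{1}_{|s|}}( ⊔_{i=1}^{d}{1−p, {1}_{m_i}, 1/(1−p), {1}_{u_i−δ_{i,d}}}, 1−p+ap ) − Li*_{{1}_{|s|}}( ⊔_{i=1}^{d}{1−p, {1}_{m_i}, 1/(1−p), {1}_{u_i−δ_{i,d}}}, 1−p ), where δ_{i,j} is the Kronecker delta (so only the last group of ones is shortened by one). -/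

import Mathlib

/-- One-dimensional polylogarithm `Li_s(x) = ∑_{n≥1} x^n/n^s`. -/
noncomputable def Li (s : ℕ) (x : ℝ) : ℝ := ∑' n : ℕ, x ^ (n + 1) / (n + 1 : ℝ) ^ s

/-- Multiple polylogarithm
`Li*_{s₁,…,s_d}(x₁,…,x_d) = ∑_{n₁ ≥ ⋯ ≥ n_d ≥ 1} ∏ᵢ xᵢ^{nᵢ}/nᵢ^{sᵢ}`. -/
noncomputable def LiStar (s : List ℕ) (x : List ℝ) : ℝ :=
  ∑' m : {m : Fin s.length → ℕ // (∀ i j : Fin s.length, i ≤ j → m j ≤ m i) ∧ ∀ i, 1 ≤ m i},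
    ∏ i : Fin s.length, x.getD (i : ℕ) 0 ^ m.1 i / (m.1 i : ℝ) ^ s.get i

/-- The exponent tuple `s = ⊔_{i=1}^{d+1} (mᵢ+2, {1}_{uᵢ})`
(here `d+1` plays the role of the paper's `d ≥ 1`). -/
def sTup2 (d : ℕ) (m u : Fin (d + 1) → ℕ) : List ℕ :=
  (List.ofFn fun i : Fin (d + 1) => (m i + 2) :: List.replicate (u i) 1).flatten

/-- The argument prefix `⊔_{i=1}^{d+1}{1−p, {1}_{mᵢ}, 1/(1−p), {1}_{uᵢ−δ_{i,d+1}}}`,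
where only the last group of ones is shortened by one. -/
noncomputable def xPre2 (d : ℕ) (m u : Fin (d + 1) → ℕ) (p : ℝ) : List ℝ :=
  (List.ofFn fun i : Fin (d + 1) =>
    (1 - p) :: (List.replicate (m i) (1 : ℝ) ++
      (1 / (1 - p)) ::
        List.replicate (u i - if i = Fin.last d then 1 else 0) (1 : ℝ))).flatten

/-!
Truncating `n₁ ≤ N` turns both sides into iterated weighted sums, and a harmonic summation operator
commutes with the binomial transform `B` with parameters `q = 1 - p` and `p`. A block
`1 - p, {1}_m, 1 / (1 - p)` on the right is `m + 2` harmonic summations, of which the inner `m + 1`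
are conjugated by `qⁿ`; the conjugation replaces `B` by the transform with parameters `1` and
`p / q`, under which harmonic summation becomes division by `n`. Hence `B` maps the truncations of
the left side exactly to the differences of the truncations on the right. It does not change limits
either: on the Borel mean `e⁻ᵗ ∑ₖ (tᵏ/k!) xₖ` it acts as the rescaling `t ↦ p t`.

The zeta sums are bounded because a harmonic summation preserves `O(√N)` and an exponent `≥ 2` turns
it into `O(1)`; the finite identity for `1 - p = |q|` and `a = 1` carries the bound over to the
right side, which gives absolute convergence there.
-/

open Filter Topology Asymptotics Finset

section BinomialTransform

variable {R : Type*} [CommSemiring R]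

/-- The binomial (Euler) transform `f ↦ (n ↦ ∑_{i + j = n} (n choose i) pⁱ qʲ f i)`, which is the
`n`-th power of `q + p · shift` applied to `f` and evaluated at `0`. -/
def binomialTransform (q p : R) : Module.End R (ℕ → R) where
  toFun f n := ∑ ij ∈ antidiagonal n, (n.choose ij.1 : R) * (p ^ ij.1 * q ^ ij.2 * f ij.1)
  map_add' f g := by
    ext n
    simp only [Pi.add_apply, mul_add, sum_add_distrib]
  map_smul' c f := by
    ext n
    simp only [Pi.smul_apply, smul_eq_mul, RingHom.id_apply, mul_sum, mul_left_comm c]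

theorem binomialTransform_apply (q p : R) (f : ℕ → R) (n : ℕ) :
    binomialTransform q p f n =
      ∑ ij ∈ antidiagonal n, (n.choose ij.1 : R) * (p ^ ij.1 * q ^ ij.2 * f ij.1) :=
  rfl

@[simp]
theorem binomialTransform_zero (q p : R) (f : ℕ → R) : binomialTransform q p f 0 = f 0 := by
  simp [binomialTransform_apply]

theorem binomialTransform_succ (q p : R) (f : ℕ → R) (n : ℕ) :
    binomialTransform q p f (n + 1) =
      q * binomialTransform q p f n + p * binomialTransform q p (fun k => f (k + 1)) n := by
  simp only [binomialTransform_apply]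
  rw [sum_antidiagonal_choose_succ_mul (fun i j => p ^ i * q ^ j * f i), mul_sum, mul_sum]
  congr 1
  · exact sum_congr rfl fun ij _ => by ring
  · refine sum_congr rfl fun ij hij => ?_
    rw [Nat.choose_symm_of_eq_add (mem_antidiagonal.1 hij).symm]
    ring

theorem binomialTransform_pow (q p a : R) (n : ℕ) :
    binomialTransform q p (fun k => a ^ k) n = (q + p * a) ^ n := by
  rw [add_comm, (Commute.all _ _).add_pow', binomialTransform_apply]
  refine sum_congr rfl fun ij _ => ?_
  rw [nsmul_eq_mul, mul_pow]
  ring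

theorem pow_mul_binomialTransform (c q p : R) (f : ℕ → R) (n : ℕ) :
    c ^ n * binomialTransform q p f n = binomialTransform (c * q) (c * p) f n := by
  simp only [binomialTransform_apply, mul_sum]
  refine sum_congr rfl fun ij hij => ?_
  rw [← mem_antidiagonal.1 hij]
  ring

theorem binomialTransform_le {q p M : ℝ} (hq : 0 ≤ q) (hp : 0 ≤ p) (hpq : p + q = 1)
    {f : ℕ → ℝ} (hf : ∀ n, f n ≤ M) (n : ℕ) : binomialTransform q p f n ≤ M := by
  have hone : binomialTransform q p (fun _ => 1) n = 1 := by
    have := binomialTransform_pow q p 1 n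
    simpa only [one_pow, mul_one, add_comm q, hpq] using this
  calc binomialTransform q p f n ≤ binomialTransform q p (M • fun _ => 1) n := by
        simp only [binomialTransform_apply, Pi.smul_apply, smul_eq_mul, mul_one]
        gcongr
        exact hf _
    _ = M := by rw [map_smul, Pi.smul_apply, hone, smul_eq_mul, mul_one]

theorem binomialTransform_succ_div {K : Type*} [Field K] [CharZero K] (q p : K) {f : ℕ → K}
    (hf : f 0 = 0) (n : ℕ) :
    binomialTransform q p f (n + 1) / ((n + 1 : ℕ) : K) =
      p * binomialTransform q p (fun k => f (k + 1) / ((k + 1 : ℕ) : K)) n := by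
  simp only [binomialTransform_apply]
  rw [Nat.sum_antidiagonal_succ, hf, mul_zero, mul_zero, zero_add, sum_div, mul_sum]
  refine sum_congr rfl fun ij _ => ?_
  have absorption : ((n + 1 : ℕ) : K) * n.choose ij.1 =
      (n + 1).choose (ij.1 + 1) * ((ij.1 + 1 : ℕ) : K) := by
    exact_mod_cast Nat.add_one_mul_choose_eq n ij.1
  have hn : ((n + 1 : ℕ) : K) ≠ 0 := Nat.cast_ne_zero.2 n.succ_ne_zero
  have hi : ((ij.1 + 1 : ℕ) : K) ≠ 0 := Nat.cast_ne_zero.2 ij.1.succ_ne_zero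
  field_simp
  linear_combination (-(p ^ (ij.1 + 1) * q ^ ij.2 * f (ij.1 + 1))) * absorption

end BinomialTransform

section NestedSum

variable {K : Type*} [Field K]

/-- The operator `f ↦ (N ↦ ∑_{n=1}^N xⁿ/nˢ f n)`, which adds one outer variable to a truncated
polylogarithm. -/
def weightedSum (s : ℕ) (x : K) : Module.End K (ℕ → K) where
  toFun f N := ∑ n ∈ Icc 1 N, x ^ n / (n : K) ^ s * f n
  map_add' f g := by
    ext N
    simp only [Pi.add_apply, mul_add, sum_add_distrib]
  map_smul' c f := by
    ext N
    simp only [Pi.smul_apply, smul_eq_mul, RingHom.id_apply, mul_sum, mul_left_comm c]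

theorem weightedSum_apply (s : ℕ) (x : K) (f : ℕ → K) (N : ℕ) :
    weightedSum s x f N = ∑ n ∈ Icc 1 N, x ^ n / (n : K) ^ s * f n :=
  rfl

/-- The operator `f ↦ (N ↦ ∑_{n=1}^N f n / n)` belonging to the exponent `1` and argument `1`. -/
def harmonicSum : Module.End K (ℕ → K) :=
  weightedSum 1 1

theorem weightedSum_one_one : weightedSum 1 (1 : K) = harmonicSum :=
  rfl

theorem harmonicSum_apply (f : ℕ → K) (N : ℕ) : harmonicSum f N = ∑ n ∈ Icc 1 N, f n / n := by
  simp only [← weightedSum_one_one, weightedSum_apply, one_pow, pow_one, one_div_mul_eq_div]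

theorem harmonicSum_zero (f : ℕ → K) : harmonicSum f 0 = 0 :=
  rfl

theorem harmonicSum_succ (f : ℕ → K) (n : ℕ) :
    harmonicSum f (n + 1) = harmonicSum f n + f (n + 1) / ((n + 1 : ℕ) : K) := by
  rw [harmonicSum_apply, sum_Icc_succ_top (by omega), ← harmonicSum_apply]

theorem weightedSum_one (x : K) (f : ℕ → K) :
    weightedSum 1 x f = harmonicSum fun n => x ^ n * f n := by
  ext N
  simp only [weightedSum_apply, harmonicSum_apply, pow_one, div_mul_eq_mul_div]

theorem weightedSum_succ_one (s : ℕ) (f : ℕ → K) :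
    weightedSum (s + 1) 1 f = harmonicSum fun n => f n / (n : K) ^ s := by
  ext N
  simp only [weightedSum_apply, harmonicSum_apply, one_pow, one_div_mul_eq_div, pow_succ, div_div]

/-- For `L = [(s₁, x₁), …, (s_d, x_d)]`, the truncated nested sum
`N ↦ ∑_{N ≥ n₁ ≥ … ≥ n_d ≥ 1} (∏ᵢ xᵢ^{nᵢ}/nᵢ^{sᵢ}) f n_d` as an operator on the innermost
weight `f`. -/
def nestedSum (L : List (ℕ × K)) : Module.End K (ℕ → K) :=
  (L.map fun c => weightedSum c.1 c.2).prod

@[simp]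
theorem nestedSum_nil : nestedSum ([] : List (ℕ × K)) = 1 :=
  rfl

@[simp]
theorem nestedSum_cons (c : ℕ × K) (L : List (ℕ × K)) :
    nestedSum (c :: L) = weightedSum c.1 c.2 * nestedSum L := by
  simp [nestedSum]

@[simp]
theorem nestedSum_append (L L' : List (ℕ × K)) :
    nestedSum (L ++ L') = nestedSum L * nestedSum L' := by
  simp [nestedSum]

@[simp]
theorem nestedSum_replicate (k : ℕ) (c : ℕ × K) :
    nestedSum (List.replicate k c) = weightedSum c.1 c.2 ^ k := by
  simp [nestedSum]

theorem nestedSum_apply_zero (L : List (ℕ × K)) {f : ℕ → K} (hf : f 0 = 0) :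
    nestedSum L f 0 = 0 := by
  cases L with
  | nil => exact hf
  | cons c L => simp [weightedSum_apply]

theorem nestedSum_mono {L : List (ℕ × ℝ)} (hL : ∀ c ∈ L, 0 ≤ c.2) {f g : ℕ → ℝ} (hfg : f ≤ g) :
    nestedSum L f ≤ nestedSum L g := by
  induction L with
  | nil => exact hfg
  | cons c L ih =>
    obtain ⟨hc, hL⟩ := List.forall_mem_cons.1 hL
    intro N
    simp only [nestedSum_cons, Module.End.mul_apply, weightedSum_apply]
    gcongr with n
    exact ih hL n

end NestedSum

section Commutation

variable {K : Type*} [Field K] [CharZero K] {f : ℕ → K}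

theorem harmonicSum_binomialTransform {q p : K} (hpq : p + q = 1) (hf : f 0 = 0) :
    harmonicSum (binomialTransform q p f) = binomialTransform q p (harmonicSum f) := by
  ext n
  induction n with
  | zero => simp [harmonicSum_zero]
  | succ n ih =>
    have shift : (fun k => harmonicSum f (k + 1)) =
        harmonicSum f + fun k => f (k + 1) / ((k + 1 : ℕ) : K) :=
      funext fun k => harmonicSum_succ f k
    rw [harmonicSum_succ, ih, binomialTransform_succ_div q p hf, binomialTransform_succ, shift,
      map_add, Pi.add_apply]
    linear_combination (-binomialTransform q p (harmonicSum f) n) * hpq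

theorem harmonicSum_binomialTransform_one (c : K) (hf : f 0 = 0) :
    harmonicSum (binomialTransform 1 c f) = binomialTransform 1 c fun k => f k / k := by
  ext n
  induction n with
  | zero => simp [harmonicSum_zero]
  | succ n ih =>
    rw [harmonicSum_succ, ih, binomialTransform_succ_div 1 c hf, binomialTransform_succ, one_mul]

theorem harmonicSum_pow_binomialTransform {q p : K} (hpq : p + q = 1) (hf : f 0 = 0) (u : ℕ) :
    (harmonicSum ^ u) (binomialTransform q p f) =
      binomialTransform q p ((harmonicSum ^ u) f) := by
  induction u with
  | zero => rfl
  | succ u ih =>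
    have h0 : (harmonicSum ^ u) f 0 = 0 := by
      simpa [weightedSum_one_one] using nestedSum_apply_zero (List.replicate u (1, (1 : K))) hf
    rw [pow_succ', Module.End.mul_apply, Module.End.mul_apply, ih,
      harmonicSum_binomialTransform hpq h0]

theorem harmonicSum_pow_binomialTransform_one (c : K) (hf : f 0 = 0) (m : ℕ) :
    (harmonicSum ^ m) (binomialTransform 1 c f) =
      binomialTransform 1 c fun k => f k / (k : K) ^ m := by
  induction m with
  | zero => simp
  | succ m ih =>
    rw [pow_succ', Module.End.mul_apply, ih, harmonicSum_binomialTransform_one c (by simp [hf])]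
    simp only [div_div, pow_succ]

theorem binomialTransform_harmonicSum_pow {q p : K} (hpq : p + q = 1) (a : K) :
    binomialTransform q p (harmonicSum fun n => a ^ n) =
      harmonicSum fun n => (q + p * a) ^ n - q ^ n := by
  -- Subtracting `0 ^ n` only changes the value at `n = 0`, which `harmonicSum` ignores.
  have h0 : (harmonicSum fun n => a ^ n) =
      harmonicSum ((fun n => a ^ n) - fun n => (0 : K) ^ n) := by
    ext N
    rw [harmonicSum_apply, harmonicSum_apply]
    refine sum_congr rfl fun n hn => ?_
    simp [zero_pow (Nat.one_le_iff_ne_zero.1 (mem_Icc.1 hn).1)]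
  rw [h0, ← harmonicSum_binomialTransform hpq (by simp), map_sub]
  congr 1
  ext n
  simp [binomialTransform_pow]

end Commutation

section Blocks

variable {K : Type*} [Field K]

/-- The exponent-argument pairs of the block `(m + 2, {1}_u)` with all arguments `1`; the pair
`c` is `(m, u)`. -/
def zetaBlock (c : ℕ × ℕ) : List (ℕ × K) :=
  (c.1 + 2, 1) :: List.replicate c.2 (1, 1)

/-- The exponent-argument pairs of the block with arguments `q, {1}_m, 1/q, {1}_u` and all
exponents `1`; the pair `c` is `(m, u)`. -/
def dualBlock (q : K) (c : ℕ × ℕ) : List (ℕ × K) :=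
  (1, q) :: (List.replicate c.1 (1, 1) ++ (1, 1 / q) :: List.replicate c.2 (1, 1))

variable [CharZero K] {q p : K} {f : ℕ → K}

/-- The weight `1/q` turns the transform with parameters `(q, p)` into the one with parameters
`(1, p / q)`, for which each `harmonicSum` becomes a division by `k`; the weight `q` restores
`(q, p)`. -/
theorem nestedSum_dualBlock_binomialTransform (hq : q ≠ 0) (hpq : p + q = 1) (hf : f 0 = 0)
    (c : ℕ × ℕ) :
    nestedSum (dualBlock q c) (binomialTransform q p f) =
      binomialTransform q p (nestedSum (zetaBlock c) f) := by
  obtain ⟨m, u⟩ := c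
  set g := (harmonicSum ^ u) f with hg
  have g0 : g 0 = 0 := by
    simpa [weightedSum_one_one] using nestedSum_apply_zero (List.replicate u (1, (1 : K))) hf
  have unscale : (fun n => (1 / q) ^ n * binomialTransform q p g n) =
      binomialTransform 1 (p / q) g := by
    ext n
    rw [pow_mul_binomialTransform, one_div_mul_cancel hq, one_div_mul_eq_div]
  have rescale (h : ℕ → K) :
      (fun n => q ^ n * binomialTransform 1 (p / q) h n) = binomialTransform q p h := by
    ext n
    rw [pow_mul_binomialTransform, mul_one, mul_div_cancel₀ p hq]
  calc nestedSum (dualBlock q (m, u)) (binomialTransform q p f)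
      = harmonicSum fun n => q ^ n * (harmonicSum ^ (m + 1))
          (fun n => (1 / q) ^ n * binomialTransform q p g n) n := by
        simp only [dualBlock, nestedSum_cons, nestedSum_append, nestedSum_replicate,
          Module.End.mul_apply, weightedSum_one_one, weightedSum_one,
          harmonicSum_pow_binomialTransform hpq hf, pow_succ, hg]
    _ = harmonicSum (binomialTransform q p fun k => g k / (k : K) ^ (m + 1)) := by
        rw [unscale, harmonicSum_pow_binomialTransform_one _ g0, rescale]
    _ = binomialTransform q p (weightedSum (m + 2) 1 g) := by
        rw [harmonicSum_binomialTransform hpq (by simp), weightedSum_succ_one]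
    _ = binomialTransform q p (nestedSum (zetaBlock (m, u)) f) := by
        simp only [zetaBlock, nestedSum_cons, nestedSum_replicate, weightedSum_one_one,
          Module.End.mul_apply, hg]

theorem nestedSum_flatMap_dualBlock_binomialTransform (hq : q ≠ 0) (hpq : p + q = 1)
    (hf : f 0 = 0) (l : List (ℕ × ℕ)) :
    nestedSum (l.flatMap (dualBlock q)) (binomialTransform q p f) =
      binomialTransform q p (nestedSum (l.flatMap zetaBlock) f) := by
  induction l with
  | nil => rfl
  | cons c l ih =>
    simp only [List.flatMap_cons, nestedSum_append, Module.End.mul_apply, ih,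
      nestedSum_dualBlock_binomialTransform hq hpq (nestedSum_apply_zero _ hf)]

theorem nestedSum_flatMap_dualBlock_harmonicSum (hq : q ≠ 0) (hpq : p + q = 1) (a : K)
    (l : List (ℕ × ℕ)) :
    nestedSum (l.flatMap (dualBlock q)) (harmonicSum fun n => (q + p * a) ^ n - q ^ n) =
      binomialTransform q p (nestedSum (l.flatMap zetaBlock) (harmonicSum fun n => a ^ n)) := by
  rw [← binomialTransform_harmonicSum_pow hpq,
    nestedSum_flatMap_dualBlock_binomialTransform hq hpq (harmonicSum_zero _)]

end Blocks

section AntitoneTuples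

/-- The index set of a multiple polylogarithm truncated at `N`: the tuples
`N ≥ m 0 ≥ m 1 ≥ … ≥ m (n - 1) ≥ 1`. -/
def antitoneTuples (n N : ℕ) : Finset (Fin n → ℕ) :=
  {m ∈ Fintype.piFinset fun _ => Icc 1 N | ∀ i j, i ≤ j → m j ≤ m i}

theorem mem_antitoneTuples {n N : ℕ} {m : Fin n → ℕ} :
    m ∈ antitoneTuples n N ↔ (∀ i, 1 ≤ m i ∧ m i ≤ N) ∧ ∀ i j, i ≤ j → m j ≤ m i := by
  simp [antitoneTuples]

theorem cons_mem_antitoneTuples {n N k : ℕ} {m : Fin n → ℕ} :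
    (Fin.cons k m : Fin (n + 1) → ℕ) ∈ antitoneTuples (n + 1) N ↔
      k ∈ Icc 1 N ∧ m ∈ antitoneTuples n k := by
  simp only [mem_antitoneTuples, Fin.forall_fin_succ, Fin.cons_zero, Fin.cons_succ, mem_Icc,
    Fin.zero_le, Fin.succ_le_succ_iff, (Fin.succ_pos _).not_ge, le_refl, true_imp_iff,
    false_imp_iff, implies_true, true_and]
  constructor
  · rintro ⟨⟨hk, hm⟩, hmk, hanti⟩
    exact ⟨hk, fun i => ⟨(hm i).1, hmk i⟩, hanti⟩
  · rintro ⟨hk, hm, hanti⟩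
    exact ⟨⟨hk, fun i => ⟨(hm i).1, (hm i).2.trans hk.2⟩⟩, fun i => (hm i).2, hanti⟩

theorem sum_antitoneTuples_succ {M : Type*} [AddCommMonoid M] (n N : ℕ)
    (F : (Fin (n + 1) → ℕ) → M) :
    ∑ m ∈ antitoneTuples (n + 1) N, F m =
      ∑ k ∈ Icc 1 N, ∑ m ∈ antitoneTuples n k, F (Fin.cons k m) := by
  rw [sum_sigma']
  refine sum_nbij' (fun m => (⟨m 0, Fin.tail m⟩ : Σ _ : ℕ, Fin n → ℕ))
    (fun x => Fin.cons x.1 x.2) ?_ ?_ ?_ ?_ ?_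
  · intro m hm
    rwa [mem_sigma, ← cons_mem_antitoneTuples, Fin.cons_self_tail]
  · rintro ⟨k, m⟩ hm
    rwa [cons_mem_antitoneTuples, ← mem_sigma (t := fun k => antitoneTuples n k)]
  · exact fun m _ => Fin.cons_self_tail m
  · exact fun x _ => by simp
  · exact fun m _ => by rw [Fin.cons_self_tail]

theorem sum_antitoneTuples_eq_nestedSum {K : Type*} [Field K] (L : List (ℕ × K)) (N : ℕ) :
    ∑ m ∈ antitoneTuples (L.map Prod.fst).length N,
        ∏ i : Fin (L.map Prod.fst).length,
          (L.map Prod.snd).getD (i : ℕ) 0 ^ m i / (m i : K) ^ (L.map Prod.fst).get i =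
      nestedSum L 1 N := by
  induction L generalizing N with
  | nil =>
    have : antitoneTuples 0 N = {default} := by
      ext m
      simp [mem_antitoneTuples, Subsingleton.elim m default]
    exact (sum_congr this fun _ _ => Fin.prod_univ_zero _).trans (sum_singleton _ _)
  | cons c L ih =>
    rw [nestedSum_cons, Module.End.mul_apply, weightedSum_apply]
    refine (sum_antitoneTuples_succ (L.map Prod.fst).length N _).trans ?_
    refine sum_congr rfl fun k _ => ?_
    rw [← ih, mul_sum]
    exact sum_congr rfl fun m _ => Fin.prod_univ_succ _

/-- The non-increasing tuples of positive integers, written as the subtype indexing `LiStar`. -/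
abbrev PosAntitoneTuple (n : ℕ) : Type :=
  {m : Fin n → ℕ // (∀ i j : Fin n, i ≤ j → m j ≤ m i) ∧ ∀ i, 1 ≤ m i}

theorem tendsto_sum_antitoneTuples {n : ℕ} {F : (Fin n → ℕ) → ℝ}
    (hF : BddAbove (Set.range fun N => ∑ m ∈ antitoneTuples n N, |F m|)) :
    Tendsto (fun N => ∑ m ∈ antitoneTuples n N, F m) atTop
      (𝓝 (∑' m : PosAntitoneTuple n, F m)) := by
  let A (N : ℕ) : Finset (PosAntitoneTuple n) := (antitoneTuples n N).subtype _
  have sum_A (G : (Fin n → ℕ) → ℝ) (N : ℕ) :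
      ∑ m ∈ A N, G m = ∑ m ∈ antitoneTuples n N, G m :=
    sum_subtype_of_mem G fun m hm =>
      ⟨(mem_antitoneTuples.1 hm).2, fun i => ((mem_antitoneTuples.1 hm).1 i).1⟩
  have mem_A (m : PosAntitoneTuple n) (N : ℕ) : m ∈ A N ↔ ∀ i, m.1 i ≤ N := by
    rw [mem_subtype, mem_antitoneTuples]
    exact ⟨fun h i => (h.1 i).2, fun h => ⟨fun i => ⟨m.2.2 i, h i⟩, m.2.1⟩⟩
  have exhaust : Tendsto A atTop atTop := by
    refine tendsto_atTop_finset_of_monotone (fun N M hNM m hm => ?_) fun m => ?_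
    · exact (mem_A m M).2 fun i => ((mem_A m N).1 hm i).trans hNM
    · exact ⟨∑ i, m.1 i, (mem_A _ _).2 fun i =>
        single_le_sum (fun _ _ => Nat.zero_le _) (mem_univ i)⟩
  obtain ⟨C, hC⟩ := hF
  have summable : Summable fun m : PosAntitoneTuple n => F m := by
    refine .of_abs <| summable_of_sum_le (c := C) (fun _ => abs_nonneg _) fun s => ?_
    obtain ⟨N, hN⟩ := (exhaust.eventually_ge_atTop s).exists
    calc ∑ m ∈ s, |F m| ≤ ∑ m ∈ A N, |F m| :=
          sum_le_sum_of_subset_of_nonneg hN fun _ _ _ => abs_nonneg _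
      _ = ∑ m ∈ antitoneTuples n N, |F m| := sum_A (fun m => |F m|) N
      _ ≤ C := hC ⟨N, rfl⟩
  exact (summable.hasSum.comp exhaust).congr fun N => sum_A F N

theorem tendsto_nestedSum_liStar (L : List (ℕ × ℝ))
    (hL : BddAbove (Set.range (nestedSum (L.map fun c => (c.1, |c.2|)) 1))) :
    Tendsto (nestedSum L 1) atTop (𝓝 (LiStar (L.map Prod.fst) (L.map Prod.snd))) := by
  refine (tendsto_sum_antitoneTuples ?_).congr (sum_antitoneTuples_eq_nestedSum L)
  have hfst : (L.map fun c => (c.1, |c.2|)).map Prod.fst = L.map Prod.fst := by simp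
  have hsnd : (L.map fun c => (c.1, |c.2|)).map Prod.snd = (L.map Prod.snd).map abs := by simp
  have habs := sum_antitoneTuples_eq_nestedSum (L.map fun c => (c.1, |c.2|))
  rw [hfst, hsnd] at habs
  refine (funext fun N => (habs N).symm.trans <| sum_congr rfl fun m _ => ?_) ▸ hL
  rw [abs_prod]
  refine prod_congr rfl fun i _ => ?_
  rw [abs_div, abs_pow, abs_pow, Nat.abs_cast, ← List.getD_map (f := abs), abs_zero]

theorem liStar_eq_zero {s : List ℕ} {x : List ℝ} {i : ℕ} (hi : i < s.length)
    (hx : x.getD i 0 = 0) : LiStar s x = 0 := by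
  refine (tsum_congr fun m => ?_).trans tsum_zero
  refine prod_eq_zero (mem_univ ⟨i, hi⟩) ?_
  rw [hx, zero_pow (Nat.one_le_iff_ne_zero.1 (m.2.2 _)), zero_div]

end AntitoneTuples

section BorelSummation

/-- The regularity half of the Silverman–Toeplitz theorem, for averages. -/
theorem tendsto_tsum_mul_of_tendsto {ι : Type*} {l : Filter ι} {w : ι → ℕ → ℝ} {x : ℕ → ℝ}
    {L : ℝ} (hw_nonneg : ∀ᶠ i in l, ∀ k, 0 ≤ w i k) (hw_sum : ∀ᶠ i in l, HasSum (w i) 1)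
    (hw_zero : ∀ k, Tendsto (fun i => w i k) l (𝓝 0)) (hx : Tendsto x atTop (𝓝 L)) :
    Tendsto (fun i => ∑' k, w i k * x k) l (𝓝 L) := by
  rw [Metric.tendsto_nhds]
  intro ε hε
  obtain ⟨K, hK⟩ := Metric.tendsto_atTop.1 hx (ε / 2) (half_pos hε)
  have head_zero : Tendsto (fun i => ∑ k ∈ range K, w i k * |x k - L|) l (𝓝 0) := by
    simpa using tendsto_finsetSum (range K) fun k _ => (hw_zero k).mul_const |x k - L|
  filter_upwards [hw_nonneg, hw_sum, head_zero.eventually_lt_const (half_pos hε)]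
    with i hw hsum hhead
  have bound (k : ℕ) : ‖w i k * (x k - L)‖ ≤
      (if k ∈ range K then w i k * |x k - L| else 0) + w i k * (ε / 2) := by
    rw [norm_mul, Real.norm_of_nonneg (hw k), Real.norm_eq_abs]
    split_ifs with hk
    · have := hw k
      exact le_add_of_nonneg_right (by positivity)
    · rw [zero_add]
      have : |x k - L| ≤ ε / 2 := (hK k (by simpa using hk)).le
      exact mul_le_mul_of_nonneg_left this (hw k)
  have hasSum_bound : HasSum
      (fun k => (if k ∈ range K then w i k * |x k - L| else 0) + w i k * (ε / 2))
      (∑ k ∈ range K, w i k * |x k - L| + 1 * (ε / 2)) := by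
    refine .add ?_ (hsum.mul_right _)
    have := hasSum_sum_of_ne_finset_zero (L := .unconditional ℕ) (s := range K)
      (f := fun k => if k ∈ range K then w i k * |x k - L| else 0) fun k hk => if_neg hk
    rwa [sum_congr rfl fun k hk => if_pos hk] at this
  have hdiff : ∑' k, w i k * x k - L = ∑' k, w i k * (x k - L) := by
    have hs : Summable fun k => w i k * (x k - L) := .of_norm_bounded hasSum_bound.summable bound
    have := (hs.hasSum.add (hsum.mul_right L)).tsum_eq
    simp only [← mul_add, sub_add_cancel] at this
    linarith
  rw [Real.dist_eq, hdiff, ← Real.norm_eq_abs]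
  calc ‖∑' k, w i k * (x k - L)‖ ≤ ∑ k ∈ range K, w i k * |x k - L| + 1 * (ε / 2) :=
        tsum_of_norm_bounded hasSum_bound bound
    _ < ε := by linarith

/-- The Borel mean `e⁻ᵗ ∑ₖ (tᵏ/k!) xₖ` of a sequence, the average of `x` against the Poisson
distribution of rate `t`. -/
noncomputable def borelMean (x : ℕ → ℝ) (t : ℝ) : ℝ :=
  ∑' k, Real.exp (-t) * (t ^ k / k.factorial) * x k

theorem hasSum_poissonWeight (t : ℝ) :
    HasSum (fun k : ℕ => Real.exp (-t) * (t ^ k / k.factorial)) 1 := by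
  have := (NormedSpace.expSeries_div_hasSum_exp t).mul_left (Real.exp (-t))
  rwa [← Real.exp_eq_exp_ℝ, ← Real.exp_add, neg_add_cancel, Real.exp_zero] at this

theorem tendsto_borelMean {x : ℕ → ℝ} {L : ℝ} (hx : Tendsto x atTop (𝓝 L)) :
    Tendsto (borelMean x) atTop (𝓝 L) := by
  refine tendsto_tsum_mul_of_tendsto ?_ (.of_forall hasSum_poissonWeight) (fun k => ?_) hx
  · filter_upwards [eventually_ge_atTop 0] with t ht k
    positivity
  · have := (Real.tendsto_pow_mul_exp_neg_atTop_nhds_zero k).div_const (k.factorial : ℝ)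
    rw [zero_div] at this
    exact this.congr fun t => by ring

theorem pow_div_factorial_mul_binomialTransform (q p t : ℝ) (x : ℕ → ℝ) (n : ℕ) :
    t ^ n / n.factorial * binomialTransform q p x n =
      ∑ ij ∈ antidiagonal n,
        (p * t) ^ ij.1 / ij.1.factorial * x ij.1 * ((q * t) ^ ij.2 / ij.2.factorial) := by
  rw [binomialTransform_apply, mul_sum]
  refine sum_congr rfl fun ij hij => ?_
  have hsum := mem_antidiagonal.1 hij
  have hchoose : (n.choose ij.1 : ℝ) = n.factorial / (ij.1.factorial * ij.2.factorial) := by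
    rw [← hsum, Nat.cast_add_choose]
  have hfac : (n.factorial : ℝ) ≠ 0 := Nat.cast_ne_zero.2 n.factorial_ne_zero
  rw [hchoose, mul_pow, mul_pow, show t ^ n = t ^ ij.1 * t ^ ij.2 by rw [← pow_add, hsum]]
  field_simp

theorem borelMean_binomialTransform {q p : ℝ} (hpq : p + q = 1) {x : ℕ → ℝ}
    (hx : x =O[atTop] (1 : ℕ → ℝ)) (t : ℝ) :
    borelMean (binomialTransform q p x) t = borelMean x (p * t) := by
  have hexp : Summable fun j : ℕ => ‖(q * t) ^ j / j.factorial‖ :=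
    (Real.summable_pow_div_factorial (q * t)).norm
  have hbound : (fun k : ℕ => (p * t) ^ k / k.factorial * x k) =O[atTop]
      fun k => (p * t) ^ k / k.factorial := by
    simpa only [Pi.one_apply, mul_one] using
      (isBigO_refl (fun k : ℕ => (p * t) ^ k / (k.factorial : ℝ)) atTop).mul hx
  have hx' : Summable fun k : ℕ => ‖(p * t) ^ k / k.factorial * x k‖ :=
    (summable_of_isBigO_nat (Real.summable_pow_div_factorial (p * t)) hbound).norm
  have cauchy : (∑' k, (p * t) ^ k / k.factorial * x k) * Real.exp (q * t) =
      ∑' n : ℕ, t ^ n / n.factorial * binomialTransform q p x n := by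
    simp only [pow_div_factorial_mul_binomialTransform]
    rw [Real.exp_eq_exp_ℝ, NormedSpace.exp_eq_tsum_div]
    exact tsum_mul_tsum_eq_tsum_sum_antidiagonal_of_summable_norm hx' hexp
  have exp_split : Real.exp (-t) * Real.exp (q * t) = Real.exp (-(p * t)) := by
    rw [← Real.exp_add]
    congr 1
    linear_combination t * hpq
  simp only [borelMean, mul_assoc (Real.exp _), tsum_mul_left]
  rw [← cauchy, ← exp_split]
  ring

theorem tendsto_binomialTransform_unique {q p : ℝ} (hp : 0 < p) (hpq : p + q = 1) {x : ℕ → ℝ}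
    {L M : ℝ} (hx : Tendsto x atTop (𝓝 L))
    (hBx : Tendsto (binomialTransform q p x) atTop (𝓝 M)) : L = M := by
  have hscaled : Tendsto (fun t => borelMean x (p * t)) atTop (𝓝 L) :=
    (tendsto_borelMean hx).comp (tendsto_id.const_mul_atTop hp)
  refine tendsto_nhds_unique hscaled ((tendsto_borelMean hBx).congr fun t => ?_)
  exact borelMean_binomialTransform hpq (hx.isBigO_one ℝ) t

end BorelSummation

section Boundedness

theorem sum_inv_sqrt_le (N : ℕ) : ∑ n ∈ Icc 1 N, (√(n : ℝ))⁻¹ ≤ 2 * √(N : ℝ) := by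
  induction N with
  | zero => simp
  | succ n ih =>
    rw [sum_Icc_succ_top (by omega)]
    have hpos : 0 < √((n + 1 : ℕ) : ℝ) := Real.sqrt_pos.2 (by positivity)
    have hn : √(n : ℝ) ^ 2 = n := Real.sq_sqrt (by positivity)
    have hn1 : √((n + 1 : ℕ) : ℝ) ^ 2 = n + 1 := by
      rw [Real.sq_sqrt (by positivity), Nat.cast_succ]
    have : (√((n + 1 : ℕ) : ℝ))⁻¹ ≤ 2 * (√((n + 1 : ℕ) : ℝ) - √(n : ℝ)) := by
      rw [inv_le_iff_one_le_mul₀ hpos]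
      nlinarith [sq_nonneg (√((n + 1 : ℕ) : ℝ) - √(n : ℝ))]
    linarith

theorem isBigO_sqrt_of_isBigO_one {f : ℕ → ℝ} (hf : f =O[atTop] (1 : ℕ → ℝ)) :
    f =O[atTop] fun n => √(n : ℝ) := by
  refine hf.trans (.of_bound 1 ?_)
  filter_upwards [eventually_ge_atTop 1] with n hn
  rw [Pi.one_apply, norm_one, one_mul, Real.norm_of_nonneg (Real.sqrt_nonneg _)]
  exact Real.one_le_sqrt.2 (Nat.one_le_cast.2 hn)

theorem isBigO_sqrt_harmonicSum {f : ℕ → ℝ} (hf : f =O[atTop] fun n => √(n : ℝ)) :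
    harmonicSum f =O[atTop] fun n => √(n : ℝ) := by
  obtain ⟨C, hC, hf⟩ := bound_of_isBigO_nat_atTop hf
  refine .of_bound (2 * C) (.of_forall fun N => ?_)
  have term_le {n : ℕ} (hn : n ∈ Icc 1 N) : ‖f n / n‖ ≤ C * (√(n : ℝ))⁻¹ := by
    have hpos : (0 : ℝ) < n := Nat.cast_pos.2 (mem_Icc.1 hn).1
    have := hf (Real.sqrt_ne_zero'.2 hpos)
    rw [Real.norm_of_nonneg (Real.sqrt_nonneg _)] at this
    rw [norm_div, Real.norm_natCast, ← Real.sqrt_div_self, ← mul_div_assoc]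
    gcongr
  calc ‖harmonicSum f N‖ ≤ ∑ n ∈ Icc 1 N, C * (√(n : ℝ))⁻¹ := by
        rw [harmonicSum_apply]
        exact norm_sum_le_of_le _ fun n hn => term_le hn
    _ ≤ C * (2 * √(N : ℝ)) := by
        rw [← mul_sum]
        gcongr
        exact sum_inv_sqrt_le N
    _ = 2 * C * ‖√(N : ℝ)‖ := by rw [Real.norm_of_nonneg (Real.sqrt_nonneg _)]; ring

theorem isBigO_sqrt_harmonicSum_pow {f : ℕ → ℝ} (hf : f =O[atTop] fun n => √(n : ℝ)) (u : ℕ) :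
    (harmonicSum ^ u) f =O[atTop] fun n => √(n : ℝ) := by
  induction u with
  | zero => exact hf
  | succ u ih =>
    rw [pow_succ', Module.End.mul_apply]
    exact isBigO_sqrt_harmonicSum ih

theorem summable_div_pow_of_isBigO_sqrt {f : ℕ → ℝ} (hf : f =O[atTop] fun n => √(n : ℝ)) {s : ℕ}
    (hs : 2 ≤ s) : Summable fun n : ℕ => f n / (n : ℝ) ^ s := by
  refine summable_of_isBigO_nat (Real.summable_nat_rpow_inv.2 (by norm_num : (1 : ℝ) < 3 / 2)) ?_
  have hpow : (fun n : ℕ => ((n : ℝ) ^ s)⁻¹) =O[atTop] fun n => ((n : ℝ) ^ 2)⁻¹ := by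
    refine .of_bound' ?_
    filter_upwards [eventually_ge_atTop 1] with n hn
    rw [Real.norm_of_nonneg (by positivity), Real.norm_of_nonneg (by positivity)]
    have : (1 : ℝ) ≤ n := Nat.one_le_cast.2 hn
    gcongr
  refine (hf.mul hpow).congr' (.of_forall fun n => rfl) ?_
  filter_upwards [eventually_ge_atTop 1] with n hn
  have hpos : (0 : ℝ) < n := Nat.cast_pos.2 hn
  rw [Real.sqrt_eq_rpow, ← Real.rpow_natCast, ← Real.rpow_neg hpos.le, ← Real.rpow_neg hpos.le,
    ← Real.rpow_add hpos]
  norm_num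

theorem isBigO_one_weightedSum {f : ℕ → ℝ} (hf : f =O[atTop] fun n => √(n : ℝ)) {s : ℕ}
    (hs : 2 ≤ s) : weightedSum s 1 f =O[atTop] (1 : ℕ → ℝ) := by
  refine .of_bound (∑' n : ℕ, ‖f n / (n : ℝ) ^ s‖) (.of_forall fun N => ?_)
  rw [Pi.one_apply, norm_one, mul_one]
  calc ‖weightedSum s 1 f N‖ = ‖∑ n ∈ Icc 1 N, f n / (n : ℝ) ^ s‖ := by
        simp only [weightedSum_apply, one_pow, one_div_mul_eq_div]
    _ ≤ ∑ n ∈ Icc 1 N, ‖f n / (n : ℝ) ^ s‖ := norm_sum_le _ _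
    _ ≤ ∑' n : ℕ, ‖f n / (n : ℝ) ^ s‖ :=
        (summable_div_pow_of_isBigO_sqrt hf hs).norm.sum_le_tsum _ fun _ _ => norm_nonneg _

theorem isBigO_one_nestedSum_zetaBlock {f : ℕ → ℝ} (hf : f =O[atTop] fun n => √(n : ℝ))
    (c : ℕ × ℕ) : nestedSum (zetaBlock c) f =O[atTop] (1 : ℕ → ℝ) := by
  simp only [zetaBlock, nestedSum_cons, nestedSum_replicate, weightedSum_one_one,
    Module.End.mul_apply]
  exact isBigO_one_weightedSum (isBigO_sqrt_harmonicSum_pow hf c.2) (by omega)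

theorem isBigO_one_nestedSum_flatMap_zetaBlock {f : ℕ → ℝ}
    (hf : f =O[atTop] fun n => √(n : ℝ)) {l : List (ℕ × ℕ)} (hl : l ≠ []) :
    nestedSum (l.flatMap zetaBlock) f =O[atTop] (1 : ℕ → ℝ) := by
  induction l with
  | nil => exact absurd rfl hl
  | cons c l ih =>
    rw [List.flatMap_cons, nestedSum_append, Module.End.mul_apply]
    refine isBigO_one_nestedSum_zetaBlock ?_ c
    rcases eq_or_ne l [] with rfl | hl
    · exact hf
    · exact isBigO_sqrt_of_isBigO_one (ih hl)

theorem bddAbove_nestedSum_zetaBlock_harmonicSum {l : List (ℕ × ℕ)} (hl : l ≠ []) :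
    BddAbove (Set.range (nestedSum (l.flatMap zetaBlock) (harmonicSum (1 : ℕ → ℝ)))) := by
  have hH : harmonicSum (1 : ℕ → ℝ) =O[atTop] fun n => √(n : ℝ) :=
    isBigO_sqrt_harmonicSum (isBigO_sqrt_of_isBigO_one (isBigO_refl _ _))
  have hbdd := (isBigO_one_iff ℝ).1 (isBigO_one_nestedSum_flatMap_zetaBlock hH hl)
  exact (hbdd.mono_le (.of_forall fun n => le_abs_self _)).bddAbove_range

/-- The dual sums are dominated by the transform of the zeta sums: at `a = 1` the innermost
weights `1 - rⁿ` appearing in the transform are at least `1 - r`. -/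
theorem bddAbove_nestedSum_dualBlock_harmonicSum {r : ℝ} (hr : 0 < r) (hr1 : r < 1)
    {l : List (ℕ × ℕ)} (hl : l ≠ []) :
    BddAbove (Set.range (nestedSum (l.flatMap (dualBlock r)) (harmonicSum (1 : ℕ → ℝ)))) := by
  obtain ⟨M, hM⟩ := bddAbove_nestedSum_zetaBlock_harmonicSum hl
  have dual_nonneg : ∀ c ∈ l.flatMap (dualBlock r), 0 ≤ c.2 := by
    simp only [List.mem_flatMap, dualBlock, List.mem_cons, List.mem_append, List.mem_replicate]
    rintro c ⟨_, _, rfl | ⟨_, rfl⟩ | rfl | ⟨_, rfl⟩⟩ <;> positivity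
  have weight_le : (1 - r) • harmonicSum (1 : ℕ → ℝ) ≤ harmonicSum fun n => 1 - r ^ n := by
    intro N
    rw [← map_smul, harmonicSum_apply, harmonicSum_apply]
    gcongr with n hn
    have : r ^ n ≤ r := pow_le_of_le_one hr.le hr1.le (Nat.one_le_iff_ne_zero.1 (mem_Icc.1 hn).1)
    simp only [Pi.smul_apply, Pi.one_apply, smul_eq_mul, mul_one]
    linarith
  have transform : nestedSum (l.flatMap (dualBlock r)) (harmonicSum fun n => 1 - r ^ n) =
      binomialTransform r (1 - r) (nestedSum (l.flatMap zetaBlock) (harmonicSum 1)) := by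
    have := nestedSum_flatMap_dualBlock_harmonicSum hr.ne' (sub_add_cancel 1 r) 1 l
    simpa only [mul_one, add_sub_cancel, one_pow, ← Pi.one_def] using this
  refine ⟨M / (1 - r), Set.forall_mem_range.2 fun N => ?_⟩
  rw [le_div_iff₀' (sub_pos.2 hr1)]
  calc (1 - r) * nestedSum (l.flatMap (dualBlock r)) (harmonicSum 1) N
      = nestedSum (l.flatMap (dualBlock r)) ((1 - r) • harmonicSum 1) N := by
        rw [map_smul, Pi.smul_apply, smul_eq_mul]
    _ ≤ binomialTransform r (1 - r) (nestedSum (l.flatMap zetaBlock) (harmonicSum 1)) N := by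
        rw [← transform]
        exact nestedSum_mono dual_nonneg weight_le N
    _ ≤ M := binomialTransform_le hr.le (sub_pos.2 hr1).le (sub_add_cancel 1 r)
        (fun n => hM ⟨n, rfl⟩) N

end Boundedness

section Limits

variable {l : List (ℕ × ℕ)}

theorem tendsto_nestedSum_harmonicSum_liStar {L : List (ℕ × ℝ)} {y : ℝ} (hy : |y| ≤ 1)
    (hL : BddAbove (Set.range
      (nestedSum (L.map fun c => (c.1, |c.2|)) (harmonicSum (1 : ℕ → ℝ))))) :
    Tendsto (nestedSum L (harmonicSum fun n => y ^ n)) atTop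
      (𝓝 (LiStar (L.map Prod.fst ++ [1]) (L.map Prod.snd ++ [y]))) := by
  have apply_one (L : List (ℕ × ℝ)) (y : ℝ) :
      nestedSum (L ++ [(1, y)]) 1 = nestedSum L (harmonicSum fun n => y ^ n) := by
    simp [weightedSum_one]
  have hpow_le : (harmonicSum fun n => |y| ^ n) ≤ harmonicSum (1 : ℕ → ℝ) := by
    intro N
    simp only [harmonicSum_apply, Pi.one_apply]
    gcongr
    exact pow_le_one₀ (abs_nonneg y) hy
  have hnonneg : ∀ c ∈ L.map fun c => (c.1, |c.2|), 0 ≤ c.2 :=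
    List.forall_mem_map.2 fun c _ => abs_nonneg c.2
  obtain ⟨M, hM⟩ := hL
  have := tendsto_nestedSum_liStar (L ++ [(1, y)]) ⟨M, Set.forall_mem_range.2 fun N => by
    rw [List.map_append, List.map_singleton, apply_one]
    exact (nestedSum_mono hnonneg hpow_le N).trans (hM ⟨N, rfl⟩)⟩
  simpa only [apply_one, List.map_append, List.map_singleton] using this

theorem tendsto_nestedSum_zetaBlock {a : ℝ} (ha : |a| ≤ 1) (hl : l ≠ []) :
    Tendsto (nestedSum (l.flatMap zetaBlock) (harmonicSum fun n => a ^ n)) atTop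
      (𝓝 (LiStar ((l.flatMap (zetaBlock (K := ℝ))).map Prod.fst ++ [1])
        ((l.flatMap (zetaBlock (K := ℝ))).map Prod.snd ++ [a]))) := by
  refine tendsto_nestedSum_harmonicSum_liStar ha ?_
  have : (l.flatMap zetaBlock).map (fun c => (c.1, |c.2|)) = l.flatMap (zetaBlock (K := ℝ)) := by
    simp only [List.map_flatMap, zetaBlock, List.map_cons, List.map_replicate, abs_one]
    rfl
  rw [this]
  exact bddAbove_nestedSum_zetaBlock_harmonicSum hl

theorem tendsto_nestedSum_dualBlock {q y : ℝ} (hq : q ≠ 0) (hq1 : |q| < 1) (hy : |y| ≤ 1)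
    (hl : l ≠ []) :
    Tendsto (nestedSum (l.flatMap (dualBlock q)) (harmonicSum fun n => y ^ n)) atTop
      (𝓝 (LiStar ((l.flatMap (dualBlock q)).map Prod.fst ++ [1])
        ((l.flatMap (dualBlock q)).map Prod.snd ++ [y]))) := by
  refine tendsto_nestedSum_harmonicSum_liStar hy ?_
  have : (l.flatMap (dualBlock q)).map (fun c => (c.1, |c.2|)) = l.flatMap (dualBlock |q|) := by
    simp only [List.map_flatMap, dualBlock, List.map_cons, List.map_append, List.map_replicate,
      abs_one, abs_div]
    rfl
  rw [this]
  exact bddAbove_nestedSum_dualBlock_harmonicSum (abs_pos.2 hq) hq1 hl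

theorem liStar_zetaBlock_eq_liStar_dualBlock_sub {q p a : ℝ} (hpq : p + q = 1) (hq : q ≠ 0)
    (hq1 : |q| < 1) (ha : |a| ≤ 1) (hqa : |q + p * a| ≤ 1) (hl : l ≠ []) :
    LiStar ((l.flatMap (zetaBlock (K := ℝ))).map Prod.fst ++ [1])
        ((l.flatMap (zetaBlock (K := ℝ))).map Prod.snd ++ [a]) =
      LiStar ((l.flatMap (dualBlock q)).map Prod.fst ++ [1])
          ((l.flatMap (dualBlock q)).map Prod.snd ++ [q + p * a]) -
        LiStar ((l.flatMap (dualBlock q)).map Prod.fst ++ [1])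
          ((l.flatMap (dualBlock q)).map Prod.snd ++ [q]) := by
  have hp : 0 < p := by linarith [(abs_lt.1 hq1).2]
  refine tendsto_binomialTransform_unique hp hpq (tendsto_nestedSum_zetaBlock ha hl) ?_
  have split : (harmonicSum fun n => (q + p * a) ^ n - q ^ n) =
      (harmonicSum fun n => (q + p * a) ^ n) - harmonicSum fun n => q ^ n :=
    map_sub harmonicSum _ _
  rw [← nestedSum_flatMap_dualBlock_harmonicSum hq hpq, split, map_sub]
  exact (tendsto_nestedSum_dualBlock hq hq1 hqa hl).sub
    (tendsto_nestedSum_dualBlock hq hq1 hq1.le hl)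

end Limits

section Encoding

variable {d : ℕ} {m u : Fin (d + 1) → ℕ}

/-- The pairs `(mᵢ, uᵢ - δ_{i,d})`, from which `zetaBlock` and `dualBlock` build the strings of the
theorem up to the last entry of each. -/
def blockData (m u : Fin (d + 1) → ℕ) : List (ℕ × ℕ) :=
  List.ofFn fun i => (m i, u i - if i = Fin.last d then 1 else 0)

theorem blockData_ne_nil : blockData m u ≠ [] := by
  simp [blockData, List.ofFn_succ]

theorem sTup2_eq_map_zetaBlock {K : Type*} [Field K] (hu : 1 ≤ u (Fin.last d)) :
    sTup2 d m u = ((blockData m u).flatMap (zetaBlock (K := K))).map Prod.fst ++ [1] := by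
  have hlast (i : Fin d) : i.castSucc ≠ Fin.last d := (Fin.castSucc_lt_last i).ne
  obtain ⟨v, hv⟩ := Nat.exists_eq_add_of_le' hu
  rw [sTup2, blockData, List.ofFn_succ', List.ofFn_succ']
  simp [zetaBlock, List.concat_eq_append, List.flatMap_def, List.map_flatten, List.map_ofFn,
    Function.comp_def, hlast, hv, List.replicate_succ']

theorem map_snd_zetaBlock {K : Type*} [Field K] (l : List (ℕ × ℕ)) :
    (l.flatMap (zetaBlock (K := K))).map Prod.snd =
      List.replicate (l.flatMap (zetaBlock (K := K))).length 1 := by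
  refine List.eq_replicate_iff.2 ⟨List.length_map _, ?_⟩
  simp only [List.mem_map, List.mem_flatMap, zetaBlock, List.mem_cons, List.mem_replicate]
  rintro _ ⟨_, ⟨_, _, rfl | ⟨_, rfl⟩⟩, rfl⟩ <;> rfl

theorem map_snd_dualBlock (p : ℝ) :
    ((blockData m u).flatMap (dualBlock (1 - p))).map Prod.snd = xPre2 d m u p := by
  simp [blockData, dualBlock, xPre2, List.flatMap_def, List.map_flatten, List.map_ofFn,
    Function.comp_def]

theorem map_fst_dualBlock {K : Type*} [Field K] (q : K) (l : List (ℕ × ℕ)) :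
    (l.flatMap (dualBlock q)).map Prod.fst =
      List.replicate ((l.flatMap (zetaBlock (K := K))).map Prod.fst).sum 1 := by
  have block (c : ℕ × ℕ) : (dualBlock q c).map Prod.fst =
      List.replicate ((zetaBlock (K := K) c).map Prod.fst).sum 1 := by
    refine List.eq_replicate_iff.2 ⟨?_, ?_⟩
    · simp only [dualBlock, zetaBlock, List.length_map, List.length_cons, List.length_append,
        List.length_replicate, List.map_cons, List.map_replicate, List.sum_cons,
        List.sum_replicate, smul_eq_mul]
      ring
    · simp only [List.mem_map, dualBlock, List.mem_cons, List.mem_append, List.mem_replicate]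
      rintro _ ⟨_, rfl | ⟨_, rfl⟩ | rfl | ⟨_, rfl⟩, rfl⟩ <;> rfl
  induction l with
  | nil => rfl
  | cons c l ih =>
    simp only [List.flatMap_cons, List.map_append, List.sum_append, List.replicate_add, ih, block]

end Encoding

theorem stmt_17_general (d : ℕ) (m u : Fin (d + 1) → ℕ) (hu : 1 ≤ u (Fin.last d))
    (a p : ℝ) (hp0 : 0 < p) (hp1 : p ≠ 1) (hp2 : a ≠ 0 → p < 2) (ha : |a| ≤ 1)
    (hap : 1 - 2 / p ≤ a) :
    LiStar (sTup2 d m u) (List.replicate ((sTup2 d m u).length - 1) (1 : ℝ) ++ [a]) =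
      LiStar (List.replicate (sTup2 d m u).sum 1) (xPre2 d m u p ++ [1 - p + a * p]) -
        LiStar (List.replicate (sTup2 d m u).sum 1) (xPre2 d m u p ++ [1 - p]) := by
  have hs := sTup2_eq_map_zetaBlock (K := ℝ) (m := m) hu
  have hlen : (sTup2 d m u).length - 1 =
      ((blockData m u).flatMap (zetaBlock (K := ℝ))).length := by
    simp [hs]
  have hones : List.replicate (sTup2 d m u).sum 1 =
      ((blockData m u).flatMap (dualBlock (1 - p))).map Prod.fst ++ [1] := by
    simp [hs, map_fst_dualBlock, List.replicate_succ']
  rcases eq_or_ne a 0 with rfl | ha0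
  · rw [zero_mul, add_zero, sub_self]
    exact liStar_eq_zero (i := (sTup2 d m u).length - 1) (by simp [hs]) (by simp)
  · have hq1 : |1 - p| < 1 := abs_lt.2 ⟨by linarith [hp2 ha0], by linarith⟩
    have hqa : |1 - p + p * a| ≤ 1 := by
      rw [sub_le_iff_le_add, ← sub_le_iff_le_add', le_div_iff₀ hp0] at hap
      exact abs_le.2 ⟨by linarith, by nlinarith [(abs_le.1 ha).2]⟩
    have key := liStar_zetaBlock_eq_liStar_dualBlock_sub (add_sub_cancel p 1)
      (sub_ne_zero.2 hp1.symm) hq1 ha hqa (blockData_ne_nil (m := m) (u := u))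
    rwa [← hs, ← hones, map_snd_zetaBlock, ← hlen, map_snd_dualBlock, mul_comm p a] at key

theorem bounds_of_abs_le_min {a p : ℝ} (ha : |a| ≤ min 1 (2 / p - 1)) :
    0 < p ∧ (a ≠ 0 → p < 2) ∧ |a| ≤ 1 ∧ 1 - 2 / p ≤ a := by
  obtain ⟨ha1, hap⟩ := le_min_iff.1 ha
  have hp : 0 < p := by
    have : 0 < 2 / p := by linarith [abs_nonneg a]
    simpa using this
  refine ⟨hp, fun ha0 => ?_, ha1, by linarith [neg_abs_le a]⟩
  have : 1 < 2 / p := by linarith [abs_pos.2 ha0]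
  rwa [one_lt_div hp] at this

/-- Second theorem on polylogarithms (Theorem 3.3). -/
theorem stmt_17 (d : ℕ) (m u : Fin (d + 1) → ℕ) (hu : 1 ≤ u (Fin.last d))
    (a p : ℝ) (hp : p ≠ 1) (ha : |a| ≤ min 1 (2 / p - 1)) :
    LiStar (sTup2 d m u) (List.replicate ((sTup2 d m u).length - 1) (1 : ℝ) ++ [a]) =
      LiStar (List.replicate (sTup2 d m u).sum 1) (xPre2 d m u p ++ [1 - p + a * p]) -
        LiStar (List.replicate (sTup2 d m u).sum 1) (xPre2 d m u p ++ [1 - p]) := by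
  obtain ⟨hp0, hp2, ha1, hap⟩ := bounds_of_abs_le_min ha
  exact stmt_17_general d m u hu a p hp0 hp hp2 ha1 hap
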